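/- Consider the closed-loop system x⁺ = Ψ x + Ξ Q(x) + E d(x), where d : ℝⁿ → ℝ^s is a neglected nonlinearity satisfying |d(x)| ≤ δ for all x in a known set 𝒬 ⊆ ℝⁿ, the data were collected with x(k) ∈ 𝒬 for all samples (so that ‖D₀‖₂ ≤ δ√T), and in the setting of Theorem 6 with Δ := δ√T·I_s the robust Lyapunov inequality holds. Let V(x) := xᵀP₁⁻¹x, 𝒳 := {x : ℓ(x) + g(x, δ) ≤ 0}, ℛ_γ := {x : V(x) ≤ γ} for arbitrary γ > 0, and 𝒵 := ℛ_γ ∩ 𝒳ᶜ. If ℛ_γ ⊆ 𝒬 and V(x) + ℓ(x) + g(x, δ) ≤ γ for all x ∈ 𝒵, then ℛ_γ is positively invariant for the closed-loop system. (Theorem 8: invariance under neglected nonlinearities.) -/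

import Mathlib

open Matrix Filter Topology

noncomputable def euclNorm {ι : Type*} [Fintype ι] (v : ι → ℝ) : ℝ :=
  Real.sqrt (∑ i, v i ^ 2)

noncomputable def spec2Norm {ι κ : Type*} [Fintype ι] [Fintype κ]
    (M : Matrix ι κ ℝ) : ℝ :=
  sSup ((fun v => euclNorm (M *ᵥ v)) '' {v | euclNorm v ≤ 1})

def LoewnerLE {ι : Type*} [Fintype ι] (X Y : Matrix ι ι ℝ) : Prop :=
  (Y - X).PosSemidef

def NegDef {ι : Type*} [Fintype ι] (M : Matrix ι ι ℝ) : Prop :=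
  (-M).PosDef

/-- The data-based bound `ℓ(x)` of inequality (34). -/
noncomputable def ellFun {n s s' p T : ℕ}
    (X₁ : Matrix (Fin n) (Fin T) ℝ) (E : Matrix (Fin n) (Fin s) ℝ)
    (Δ : Matrix (Fin s) (Fin s') ℝ) (P₁ Ω : Matrix (Fin n) (Fin n) ℝ)
    (G₁ : Matrix (Fin T) (Fin n) ℝ) (G₂ : Matrix (Fin T) (Fin p) ℝ)
    (Q : (Fin n → ℝ) → Fin p → ℝ) (x : Fin n → ℝ) : ℝ :=
  - (x ⬝ᵥ ((P₁⁻¹ * Ω * P₁⁻¹) *ᵥ x))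
  + (((2:ℝ) • ((X₁ * G₁) *ᵥ x) + (X₁ * G₂) *ᵥ Q x) ⬝ᵥ (P₁⁻¹ *ᵥ ((X₁ * G₂) *ᵥ Q x)))
  + spec2Norm Δ
      * euclNorm (((2:ℝ) • ((X₁ * G₁) *ᵥ x) + (X₁ * G₂) *ᵥ Q x) ᵥ* (P₁⁻¹ * E))
      * euclNorm (G₂ *ᵥ Q x)
  + spec2Norm Δ * euclNorm ((2:ℝ) • (G₁ *ᵥ x) + G₂ *ᵥ Q x)
      * euclNorm ((Eᵀ * P₁⁻¹ * X₁ * G₂) *ᵥ Q x)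
  + spec2Norm Δ ^ 2 * spec2Norm (Eᵀ * P₁⁻¹ * E)
      * euclNorm ((2:ℝ) • (G₁ *ᵥ x) + G₂ *ᵥ Q x) * euclNorm (G₂ *ᵥ Q x)

/-- The disturbance term `g(x, δ) = r₁(x)δ + r₂(x)δ + r₃δ²` of (35)-(36). -/
noncomputable def gFun {n s s' p T : ℕ}
    (X₁ : Matrix (Fin n) (Fin T) ℝ) (E : Matrix (Fin n) (Fin s) ℝ)
    (Δ : Matrix (Fin s) (Fin s') ℝ) (P₁ : Matrix (Fin n) (Fin n) ℝ)
    (G₁ : Matrix (Fin T) (Fin n) ℝ) (G₂ : Matrix (Fin T) (Fin p) ℝ)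
    (Q : (Fin n → ℝ) → Fin p → ℝ) (δ : ℝ) (x : Fin n → ℝ) : ℝ :=
  2 * euclNorm (((X₁ * G₁) *ᵥ x + (X₁ * G₂) *ᵥ Q x) ᵥ* (P₁⁻¹ * E)) * δ
  + 2 * spec2Norm Δ * spec2Norm (Eᵀ * P₁⁻¹ * E)
      * euclNorm (G₁ *ᵥ x + G₂ *ᵥ Q x) * δ
  + spec2Norm (Eᵀ * P₁⁻¹ * E) * δ ^ 2

/-!
Write `M = X₁ - E D₀`, so that the closed loop is `x⁺ = M (G₁ x + G₂ Q(x)) + E d(x)`. Expanding `V`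
along its part without `d`, the quadratic term in `M G₁ x` decreases by the Lyapunov inequality at
the true sample matrix `D₀`; in the remaining terms, which are known up to `E D₀`, Cauchy–Schwarz
and `‖D₀‖ ≤ ‖Δ‖` give `ℓ`. The same estimate for the increment of `V` caused by `E d(x)` gives `g`.
Thus `V(x⁺) ≤ V(x) + ℓ(x) + g(x, δ)` on the sublevel set, and the right-hand side is at most `γ`
both on `𝒳` and off it.
-/

section Norms

open scoped Matrix.Norms.L2Operator

variable {ι κ μ : Type*} [Fintype ι] [Fintype κ] [Fintype μ]

lemma euclNorm_eq_norm (v : ι → ℝ) : euclNorm v = ‖WithLp.toLp 2 v‖ := by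
  simp only [euclNorm, EuclideanSpace.norm_eq, Real.norm_eq_abs, sq_abs]

lemma euclNorm_nonneg (v : ι → ℝ) : 0 ≤ euclNorm v := Real.sqrt_nonneg _

lemma euclNorm_zero : euclNorm (0 : ι → ℝ) = 0 := by simp [euclNorm]

lemma euclNorm_neg (v : ι → ℝ) : euclNorm (-v) = euclNorm v := by simp [euclNorm]

lemma euclNorm_smul (c : ℝ) (v : ι → ℝ) : euclNorm (c • v) = |c| * euclNorm v := by
  rw [euclNorm_eq_norm, euclNorm_eq_norm, WithLp.toLp_smul, norm_smul, Real.norm_eq_abs]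

lemma euclNorm_sub_le (u v : ι → ℝ) : euclNorm (u - v) ≤ euclNorm u + euclNorm v := by
  simpa only [euclNorm_eq_norm, WithLp.toLp_sub] using norm_sub_le _ _

lemma euclNorm_sq (v : ι → ℝ) : euclNorm v ^ 2 = v ⬝ᵥ v := by
  rw [euclNorm, Real.sq_sqrt (by positivity)]
  simp only [dotProduct, sq]

lemma dotProduct_le_euclNorm_mul_euclNorm (u v : ι → ℝ) : u ⬝ᵥ v ≤ euclNorm u * euclNorm v :=
  Real.sum_mul_le_sqrt_mul_sqrt _ _ _

lemma spec2Norm_eq_norm [DecidableEq κ] (M : Matrix ι κ ℝ) : spec2Norm M = ‖M‖ := by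
  rw [l2_opNorm_def, ← ContinuousLinearMap.sSup_unitClosedBall_eq_norm, spec2Norm]
  congr 1
  ext r
  constructor
  · rintro ⟨v, hv, rfl⟩
    exact ⟨WithLp.toLp 2 v, by simpa [euclNorm_eq_norm] using hv, (euclNorm_eq_norm _).symm⟩
  · rintro ⟨v, hv, rfl⟩
    exact ⟨v.ofLp, by simpa [euclNorm_eq_norm] using hv, euclNorm_eq_norm _⟩

lemma spec2Norm_nonneg (M : Matrix ι κ ℝ) : 0 ≤ spec2Norm M := by
  classical
  exact spec2Norm_eq_norm M ▸ norm_nonneg M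

lemma spec2Norm_transpose (M : Matrix ι κ ℝ) : spec2Norm Mᵀ = spec2Norm M := by
  classical
  rw [spec2Norm_eq_norm, spec2Norm_eq_norm, ← conjTranspose_eq_transpose_of_trivial,
    l2_opNorm_conjTranspose]

lemma euclNorm_mulVec_le (M : Matrix ι κ ℝ) (v : κ → ℝ) :
    euclNorm (M *ᵥ v) ≤ spec2Norm M * euclNorm v := by
  classical
  rw [spec2Norm_eq_norm, euclNorm_eq_norm, euclNorm_eq_norm]
  exact l2_opNorm_mulVec M (WithLp.toLp 2 v)

lemma spec2Norm_le {M : Matrix ι κ ℝ} {K : ℝ} (hK : 0 ≤ K)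
    (h : ∀ v, euclNorm (M *ᵥ v) ≤ K * euclNorm v) : spec2Norm M ≤ K := by
  refine Real.sSup_le ?_ hK
  rintro _ ⟨v, hv, rfl⟩
  exact (h v).trans (mul_le_of_le_one_right hK hv)

lemma loewnerLE_mul_transpose_iff {M : Matrix ι κ ℝ} {N : Matrix ι μ ℝ} :
    LoewnerLE (M * Mᵀ) (N * Nᵀ) ↔ ∀ v, euclNorm (Mᵀ *ᵥ v) ≤ euclNorm (Nᵀ *ᵥ v) := by
  have hherm : (N * Nᵀ - M * Mᵀ).IsHermitian := by
    simp [IsHermitian, conjTranspose_eq_transpose_of_trivial]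
  simp only [LoewnerLE, posSemidef_iff_dotProduct_mulVec, hherm, true_and, star_trivial,
    sub_mulVec, dotProduct_sub, sub_nonneg]
  refine forall_congr' fun v => ?_
  rw [← sq_le_sq₀ (euclNorm_nonneg _) (euclNorm_nonneg _), euclNorm_sq, euclNorm_sq,
    ← mulVec_mulVec, ← mulVec_mulVec, dotProduct_mulVec v M, dotProduct_mulVec v N,
    mulVec_transpose, mulVec_transpose]

lemma spec2Norm_le_of_loewnerLE {M : Matrix ι κ ℝ} {N : Matrix ι μ ℝ}
    (h : LoewnerLE (M * Mᵀ) (N * Nᵀ)) : spec2Norm M ≤ spec2Norm N := by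
  rw [← spec2Norm_transpose M, ← spec2Norm_transpose N]
  exact spec2Norm_le (spec2Norm_nonneg _) fun v =>
    (loewnerLE_mul_transpose_iff.mp h v).trans (euclNorm_mulVec_le _ v)

lemma loewnerLE_smul_one_of_spec2Norm_le [DecidableEq ι] {M : Matrix ι κ ℝ} {K : ℝ}
    (hM : spec2Norm M ≤ K) :
    LoewnerLE (M * Mᵀ) ((K • (1 : Matrix ι ι ℝ)) * (K • (1 : Matrix ι ι ℝ))ᵀ) := by
  refine loewnerLE_mul_transpose_iff.mpr fun v => ?_
  calc euclNorm (Mᵀ *ᵥ v) ≤ spec2Norm Mᵀ * euclNorm v := euclNorm_mulVec_le _ v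
    _ ≤ |K| * euclNorm v := by
      rw [spec2Norm_transpose]
      exact mul_le_mul_of_nonneg_right (hM.trans (le_abs_self K)) (euclNorm_nonneg v)
    _ = euclNorm ((K • (1 : Matrix ι ι ℝ))ᵀ *ᵥ v) := by
      rw [transpose_smul, transpose_one, smul_mulVec, one_mulVec, euclNorm_smul]

lemma NegDef.loewnerLE_zero {M : Matrix ι ι ℝ} (h : NegDef M) : LoewnerLE M 0 := by
  rw [LoewnerLE, zero_sub]
  exact PosDef.posSemidef h

end Norms

section BilinearForm

lemma sub_mul_mulVec {R ι κ τ : Type*} [Fintype κ] [Fintype τ] [Ring R] (X : Matrix ι τ R)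
    (E : Matrix ι κ R) (D : Matrix κ τ R) (a : τ → R) :
    (X - E * D) *ᵥ a = X *ᵥ a + E *ᵥ (-(D *ᵥ a)) := by
  rw [sub_mulVec, mulVec_neg, mulVec_mulVec, sub_eq_add_neg]

variable {ι κ τ : Type*} [Fintype ι] [Fintype κ] [Fintype τ]

lemma mulVec_dotProduct_mulVec {R : Type*} [NonUnitalCommSemiring R] (E : Matrix ι κ R)
    (N : Matrix ι τ R) (u : κ → R) (z : τ → R) :
    (E *ᵥ u) ⬝ᵥ (N *ᵥ z) = u ⬝ᵥ ((Eᵀ * N) *ᵥ z) := by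
  rw [← mulVec_mulVec, dotProduct_mulVec u, vecMul_transpose]

lemma dotProduct_mulVec_add_self {R : Type*} [CommRing R] {N : Matrix ι ι R} (hN : N.IsSymm)
    (a b : ι → R) :
    (a + b) ⬝ᵥ (N *ᵥ (a + b)) = a ⬝ᵥ (N *ᵥ a) + ((2 : R) • a + b) ⬝ᵥ (N *ᵥ b) := by
  have hcomm : b ⬝ᵥ (N *ᵥ a) = a ⬝ᵥ (N *ᵥ b) := by
    rw [← dotProduct_transpose_mulVec, hN.eq]
  simp only [mulVec_add, dotProduct_add, add_dotProduct, smul_dotProduct, smul_eq_mul, hcomm]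
  ring

lemma add_dotProduct_mulVec_add_le (N : Matrix ι ι ℝ) (E : Matrix ι κ ℝ) (y z : ι → ℝ)
    (u v : κ → ℝ) :
    (y + E *ᵥ u) ⬝ᵥ (N *ᵥ (z + E *ᵥ v)) ≤ y ⬝ᵥ (N *ᵥ z)
      + euclNorm (y ᵥ* (N * E)) * euclNorm v + euclNorm u * euclNorm ((Eᵀ * N) *ᵥ z)
      + spec2Norm (Eᵀ * N * E) * euclNorm u * euclNorm v := by
  have hyv : y ⬝ᵥ (N *ᵥ (E *ᵥ v)) ≤ euclNorm (y ᵥ* (N * E)) * euclNorm v := by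
    rw [mulVec_mulVec, dotProduct_mulVec]
    exact dotProduct_le_euclNorm_mul_euclNorm _ _
  have huz : (E *ᵥ u) ⬝ᵥ (N *ᵥ z) ≤ euclNorm u * euclNorm ((Eᵀ * N) *ᵥ z) := by
    rw [mulVec_dotProduct_mulVec]
    exact dotProduct_le_euclNorm_mul_euclNorm _ _
  have huv : (E *ᵥ u) ⬝ᵥ (N *ᵥ (E *ᵥ v)) ≤
      spec2Norm (Eᵀ * N * E) * euclNorm u * euclNorm v := by
    rw [mulVec_dotProduct_mulVec, mulVec_mulVec, mul_assoc, mul_left_comm]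
    exact (dotProduct_le_euclNorm_mul_euclNorm _ _).trans
      (mul_le_mul_of_nonneg_left (euclNorm_mulVec_le _ v) (euclNorm_nonneg u))
  simp only [mulVec_add, dotProduct_add, add_dotProduct]
  linarith

lemma sub_mul_mulVec_dotProduct_mulVec_le (N : Matrix ι ι ℝ) (X : Matrix ι τ ℝ)
    (E : Matrix ι κ ℝ) {D : Matrix κ τ ℝ} {K : ℝ} (hD : spec2Norm D ≤ K) (a b : τ → ℝ) :
    ((X - E * D) *ᵥ a) ⬝ᵥ (N *ᵥ ((X - E * D) *ᵥ b)) ≤ (X *ᵥ a) ⬝ᵥ (N *ᵥ (X *ᵥ b))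
      + K * euclNorm ((X *ᵥ a) ᵥ* (N * E)) * euclNorm b
      + K * euclNorm a * euclNorm ((Eᵀ * N) *ᵥ (X *ᵥ b))
      + K ^ 2 * spec2Norm (Eᵀ * N * E) * euclNorm a * euclNorm b := by
  have hDvec : ∀ v, euclNorm (-(D *ᵥ v)) ≤ K * euclNorm v := fun v => by
    rw [euclNorm_neg]
    exact (euclNorm_mulVec_le D v).trans (mul_le_mul_of_nonneg_right hD (euclNorm_nonneg v))
  rw [sub_mul_mulVec, sub_mul_mulVec]
  calc _ ≤ _ := add_dotProduct_mulVec_add_le N E _ _ _ _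
    _ ≤ (X *ᵥ a) ⬝ᵥ (N *ᵥ (X *ᵥ b))
        + euclNorm ((X *ᵥ a) ᵥ* (N * E)) * (K * euclNorm b)
        + K * euclNorm a * euclNorm ((Eᵀ * N) *ᵥ (X *ᵥ b))
        + spec2Norm (Eᵀ * N * E) * (K * euclNorm a) * (K * euclNorm b) := by
      have hDa₀ := (euclNorm_nonneg _).trans (hDvec a)
      have hDb₀ := euclNorm_nonneg (-(D *ᵥ b))
      have hX₀ := euclNorm_nonneg ((X *ᵥ a) ᵥ* (N * E))
      have hXb₀ := euclNorm_nonneg ((Eᵀ * N) *ᵥ (X *ᵥ b))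
      have hE₀ := spec2Norm_nonneg (Eᵀ * N * E)
      gcongr
      exacts [hDvec b, hDvec a, hDvec a, hDvec b]
    _ = _ := by ring

lemma two_smul_sub_mul_mulVec_add_dotProduct_mulVec_le (N : Matrix ι ι ℝ) (X : Matrix ι τ ℝ)
    (E : Matrix ι κ ℝ) {D : Matrix κ τ ℝ} {K δ : ℝ} (hD : spec2Norm D ≤ K) {w : κ → ℝ}
    (hw : euclNorm w ≤ δ) (c : τ → ℝ) :
    ((2 : ℝ) • ((X - E * D) *ᵥ c) + E *ᵥ w) ⬝ᵥ (N *ᵥ (E *ᵥ w)) ≤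
      2 * euclNorm ((X *ᵥ c) ᵥ* (N * E)) * δ + 2 * K * spec2Norm (Eᵀ * N * E) * euclNorm c * δ
        + spec2Norm (Eᵀ * N * E) * δ ^ 2 := by
  have hu : euclNorm (w - (2 : ℝ) • (D *ᵥ c)) ≤ δ + 2 * (K * euclNorm c) := by
    refine (euclNorm_sub_le _ _).trans ?_
    rw [euclNorm_smul, abs_two]
    gcongr
    exact (euclNorm_mulVec_le D c).trans (mul_le_mul_of_nonneg_right hD (euclNorm_nonneg c))
  have hsplit : (2 : ℝ) • ((X - E * D) *ᵥ c) + E *ᵥ w =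
      (2 : ℝ) • (X *ᵥ c) + E *ᵥ (w - (2 : ℝ) • (D *ᵥ c)) := by
    rw [sub_mulVec, mulVec_sub, mulVec_smul, mulVec_mulVec, smul_sub]
    abel
  calc
    _ ≤ euclNorm (((2 : ℝ) • (X *ᵥ c)) ᵥ* (N * E)) * euclNorm w
        + spec2Norm (Eᵀ * N * E) * euclNorm (w - (2 : ℝ) • (D *ᵥ c)) * euclNorm w := by
      simpa [hsplit, euclNorm_zero] using
        add_dotProduct_mulVec_add_le N E ((2 : ℝ) • (X *ᵥ c)) 0 (w - (2 : ℝ) • (D *ᵥ c)) w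
    _ ≤ 2 * euclNorm ((X *ᵥ c) ᵥ* (N * E)) * δ
        + spec2Norm (Eᵀ * N * E) * (δ + 2 * (K * euclNorm c)) * δ := by
      have hw₀ := euclNorm_nonneg w
      have hu₀ := (euclNorm_nonneg _).trans hu
      have hX₀ := euclNorm_nonneg ((X *ᵥ c) ᵥ* (N * E))
      have hE₀ := spec2Norm_nonneg (Eᵀ * N * E)
      rw [smul_vecMul, euclNorm_smul, abs_two]
      gcongr
    _ = _ := by ring

end BilinearForm

/-- The quadratic Lyapunov function `V(x) = xᵀP⁻¹x`; its parameter is `P`, as in the Lyapunov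
inequality, rather than `P⁻¹`. -/
noncomputable def lyapunovFun {ι : Type*} [Fintype ι] [DecidableEq ι] (P : Matrix ι ι ℝ)
    (x : ι → ℝ) : ℝ :=
  x ⬝ᵥ (P⁻¹ *ᵥ x)

lemma lyapunovFun_mulVec_le {ι τ : Type*} [Fintype ι] [DecidableEq ι] [Fintype τ]
    {P Ω : Matrix ι ι ℝ} (hPsymm : P.IsSymm) (hP : IsUnit P) {M : Matrix ι τ ℝ}
    {Y : Matrix τ ι ℝ} (h : LoewnerLE (Yᵀ * Mᵀ * P⁻¹ * (M * Y) - P + Ω) 0) (x : ι → ℝ) :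
    lyapunovFun P (M *ᵥ ((Y * P⁻¹) *ᵥ x)) ≤
      lyapunovFun P x - x ⬝ᵥ ((P⁻¹ * Ω * P⁻¹) *ᵥ x) := by
  set z := P⁻¹ *ᵥ x with hz
  have hsucc : z ⬝ᵥ ((Yᵀ * Mᵀ * P⁻¹ * (M * Y)) *ᵥ z) =
      lyapunovFun P (M *ᵥ ((Y * P⁻¹) *ᵥ x)) := by
    rw [lyapunovFun, ← mulVec_mulVec x Y, ← hz, mulVec_mulVec z M Y,
      mulVec_dotProduct_mulVec (M * Y), mulVec_mulVec z _ (M * Y), transpose_mul]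
  have hcurr : z ⬝ᵥ (P *ᵥ z) = lyapunovFun P x := by
    rw [hz, mulVec_mulVec, mul_nonsing_inv P ((isUnit_iff_isUnit_det P).mp hP), one_mulVec,
      dotProduct_comm, lyapunovFun]
  have hdecr : z ⬝ᵥ (Ω *ᵥ z) = x ⬝ᵥ ((P⁻¹ * Ω * P⁻¹) *ᵥ x) := by
    rw [hz, mulVec_dotProduct_mulVec, hPsymm.inv.eq, mulVec_mulVec]
  have hneg := h.dotProduct_mulVec_nonneg z
  rw [star_trivial, zero_sub, neg_mulVec, dotProduct_neg, add_mulVec, sub_mulVec, dotProduct_add,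
    dotProduct_sub, hsucc, hcurr, hdecr] at hneg
  linarith

section ClosedLoop

variable {n p s s' T : ℕ} {X₁ : Matrix (Fin n) (Fin T) ℝ} {E : Matrix (Fin n) (Fin s) ℝ}
  {D₀ : Matrix (Fin s) (Fin T) ℝ} {Δ : Matrix (Fin s) (Fin s') ℝ}
  {P₁ Ω : Matrix (Fin n) (Fin n) ℝ}

lemma lyapunovFun_mulVec_le_add_ellFun (hPsymm : P₁.IsSymm) (hP : IsUnit P₁)
    (hD₀ : spec2Norm D₀ ≤ spec2Norm Δ) {Y₁ : Matrix (Fin T) (Fin n) ℝ}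
    (hlyap : LoewnerLE
      (Y₁ᵀ * (X₁ - E * D₀)ᵀ * P₁⁻¹ * ((X₁ - E * D₀) * Y₁) - P₁ + Ω) 0)
    (G₂ : Matrix (Fin T) (Fin p) ℝ) (Q : (Fin n → ℝ) → Fin p → ℝ) (x : Fin n → ℝ) :
    lyapunovFun P₁ ((X₁ - E * D₀) *ᵥ ((Y₁ * P₁⁻¹) *ᵥ x + G₂ *ᵥ Q x)) ≤
      lyapunovFun P₁ x + ellFun X₁ E Δ P₁ Ω (Y₁ * P₁⁻¹) G₂ Q x := by
  have hlin := lyapunovFun_mulVec_le hPsymm hP hlyap x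
  have hcross := sub_mul_mulVec_dotProduct_mulVec_le P₁⁻¹ X₁ E hD₀
    ((2 : ℝ) • ((Y₁ * P₁⁻¹) *ᵥ x) + G₂ *ᵥ Q x) (G₂ *ᵥ Q x)
  rw [lyapunovFun, mulVec_add, dotProduct_mulVec_add_self hPsymm.inv, ← lyapunovFun, ellFun]
  simp only [mulVec_add, mulVec_smul, ← mulVec_mulVec] at hlin hcross ⊢
  linarith

lemma lyapunovFun_add_mulVec_le_add_gFun (hPsymm : P₁.IsSymm)
    (hD₀ : spec2Norm D₀ ≤ spec2Norm Δ) (G₁ : Matrix (Fin T) (Fin n) ℝ)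
    (G₂ : Matrix (Fin T) (Fin p) ℝ) (Q : (Fin n → ℝ) → Fin p → ℝ) {w : Fin s → ℝ} {δ : ℝ}
    (hw : euclNorm w ≤ δ) (x : Fin n → ℝ) :
    lyapunovFun P₁ ((X₁ - E * D₀) *ᵥ (G₁ *ᵥ x + G₂ *ᵥ Q x) + E *ᵥ w) ≤
      lyapunovFun P₁ ((X₁ - E * D₀) *ᵥ (G₁ *ᵥ x + G₂ *ᵥ Q x)) +
        gFun X₁ E Δ P₁ G₁ G₂ Q δ x := by
  have hincr := two_smul_sub_mul_mulVec_add_dotProduct_mulVec_le P₁⁻¹ X₁ E hD₀ hw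
    (G₁ *ᵥ x + G₂ *ᵥ Q x)
  rw [lyapunovFun, dotProduct_mulVec_add_self hPsymm.inv, ← lyapunovFun, gFun]
  simp only [← mulVec_mulVec _ X₁, ← mulVec_add]
  exact add_le_add_right hincr _

theorem invariance_neglected_nonlinearities_general (hPsymm : P₁.IsSymm) (hP : IsUnit P₁)
    (hD₀ : spec2Norm D₀ ≤ spec2Norm Δ) {Y₁ : Matrix (Fin T) (Fin n) ℝ}
    (hlyap : LoewnerLE
      (Y₁ᵀ * (X₁ - E * D₀)ᵀ * P₁⁻¹ * ((X₁ - E * D₀) * Y₁) - P₁ + Ω) 0)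
    {G₁ : Matrix (Fin T) (Fin n) ℝ} (hG₁ : G₁ = Y₁ * P₁⁻¹) {G₂ : Matrix (Fin T) (Fin p) ℝ}
    {Q : (Fin n → ℝ) → Fin p → ℝ} {d : (Fin n → ℝ) → Fin s → ℝ} {δ γ : ℝ}
    (hd : ∀ x, lyapunovFun P₁ x ≤ γ → euclNorm (d x) ≤ δ)
    (hZ : ∀ x, lyapunovFun P₁ x ≤ γ →
      0 < ellFun X₁ E Δ P₁ Ω G₁ G₂ Q x + gFun X₁ E Δ P₁ G₁ G₂ Q δ x →
      lyapunovFun P₁ x + ellFun X₁ E Δ P₁ Ω G₁ G₂ Q x + gFun X₁ E Δ P₁ G₁ G₂ Q δ x ≤ γ)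
    (x : ℕ → Fin n → ℝ)
    (hx : ∀ t, x (t + 1) = ((X₁ - E * D₀) * G₁) *ᵥ x t + ((X₁ - E * D₀) * G₂) *ᵥ Q (x t) +
      E *ᵥ d (x t))
    (h0 : lyapunovFun P₁ (x 0) ≤ γ) (t : ℕ) : lyapunovFun P₁ (x t) ≤ γ := by
  induction t with
  | zero => exact h0
  | succ t ih =>
    subst hG₁
    have hnominal := lyapunovFun_mulVec_le_add_ellFun hPsymm hP hD₀ hlyap G₂ Q (x t)
    have hdisturbed := lyapunovFun_add_mulVec_le_add_gFun (X₁ := X₁) (E := E) hPsymm hD₀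
      (Y₁ * P₁⁻¹) G₂ Q (hd (x t) ih) (x t)
    rw [hx t, ← mulVec_mulVec, ← mulVec_mulVec _ _ G₂, ← mulVec_add]
    rcases le_or_gt (ellFun X₁ E Δ P₁ Ω (Y₁ * P₁⁻¹) G₂ Q (x t)
      + gFun X₁ E Δ P₁ (Y₁ * P₁⁻¹) G₂ Q δ (x t)) 0 with hle | hpos
    · linarith
    · linarith [hZ (x t) ih hpos]

end ClosedLoop

/-- Theorem 8 (invariance under neglected nonlinearities). -/
theorem invariance_neglected_nonlinearities
    {n m p s T : ℕ}
    (A : Matrix (Fin n) (Fin n ⊕ Fin p) ℝ) (B : Matrix (Fin n) (Fin m) ℝ)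
    (E : Matrix (Fin n) (Fin s) ℝ)
    (Q : (Fin n → ℝ) → Fin p → ℝ)
    (U₀ : Matrix (Fin m) (Fin T) ℝ) (Z₀ : Matrix (Fin n ⊕ Fin p) (Fin T) ℝ)
    (X₁ : Matrix (Fin n) (Fin T) ℝ) (D₀ : Matrix (Fin s) (Fin T) ℝ)
    (hdata : X₁ = A * Z₀ + B * U₀ + E * D₀)
    -- the neglected nonlinearity and its strength:
    (d : (Fin n → ℝ) → Fin s → ℝ) (𝒬set : Set (Fin n → ℝ))
    (δ : ℝ) (hδ : 0 < δ)
    (hd : ∀ x ∈ 𝒬set, euclNorm (d x) ≤ δ)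
    (Δ : Matrix (Fin s) (Fin s) ℝ)
    (hΔ : Δ = (δ * Real.sqrt T) • (1 : Matrix (Fin s) (Fin s) ℝ))
    -- the data were collected inside 𝒬, so that ‖D₀‖₂ ≤ δ√T:
    (hD₀norm : spec2Norm D₀ ≤ δ * Real.sqrt T)
    (P₁ : Matrix (Fin n) (Fin n) ℝ) (hP₁symm : P₁.IsSymm) (hP₁ : P₁.PosDef)
    (Ω : Matrix (Fin n) (Fin n) ℝ) (hΩsymm : Ω.IsSymm) (hΩ : Ω.PosDef)
    (Y₁ : Matrix (Fin T) (Fin n) ℝ) (G₂ : Matrix (Fin T) (Fin p) ℝ)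
    -- the robust Lyapunov inequality:
    (hrob : ∀ D : Matrix (Fin s) (Fin T) ℝ, LoewnerLE (D * Dᵀ) (Δ * Δᵀ) →
      NegDef (Y₁ᵀ * (X₁ - E * D)ᵀ * P₁⁻¹ * ((X₁ - E * D) * Y₁) - P₁ + Ω))
    (G₁ : Matrix (Fin T) (Fin n) ℝ) (hG₁ : G₁ = Y₁ * P₁⁻¹)
    (Ψ : Matrix (Fin n) (Fin n) ℝ) (hΨ : Ψ = (X₁ - E * D₀) * G₁)
    (Ξ : Matrix (Fin n) (Fin p) ℝ) (hΞ : Ξ = (X₁ - E * D₀) * G₂)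
    (V : (Fin n → ℝ) → ℝ) (hV : ∀ x, V x = x ⬝ᵥ (P₁⁻¹ *ᵥ x))
    (γ : ℝ) (hγ : 0 < γ)
    -- ℛ_γ ⊆ 𝒬:
    (hRQ : ∀ x : Fin n → ℝ, V x ≤ γ → x ∈ 𝒬set)
    -- V(x) + ℓ(x) + g(x,δ) ≤ γ for all x ∈ 𝒵 = ℛ_γ ∩ 𝒳ᶜ:
    (hZ : ∀ x : Fin n → ℝ, V x ≤ γ →
      0 < ellFun X₁ E Δ P₁ Ω G₁ G₂ Q x + gFun X₁ E Δ P₁ G₁ G₂ Q δ x →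
      V x + ellFun X₁ E Δ P₁ Ω G₁ G₂ Q x + gFun X₁ E Δ P₁ G₁ G₂ Q δ x ≤ γ) :
    -- then ℛ_γ is positively invariant for x⁺ = Ψx + ΞQ(x) + E d(x):
    ∀ x : ℕ → Fin n → ℝ,
      (∀ t, x (t + 1) = Ψ *ᵥ x t + Ξ *ᵥ Q (x t) + E *ᵥ d (x t)) →
      V (x 0) ≤ γ → ∀ t, V (x t) ≤ γ := by
  obtain rfl : V = lyapunovFun P₁ := funext hV
  subst hΔ hΨ hΞ
  have hD₀ := loewnerLE_smul_one_of_spec2Norm_le hD₀norm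
  exact invariance_neglected_nonlinearities_general hP₁symm hP₁.isUnit
    (spec2Norm_le_of_loewnerLE hD₀) (hrob D₀ hD₀).loewnerLE_zero hG₁
    (fun x hx => hd x (hRQ x hx)) hZ
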